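/- Let I be a nonempty set of non-negative integers and let S ⊆ ℕ^(I) be a gap absorbing monoid. Then for every s ∈ S, the set of lengths L(s) is an interval of integers. -/

import Mathlib

open Pointwise

section Defs

variable {M : Type*} [AddCommMonoid M] [PartialOrder M]

/-- `S* = S \ {0}`. -/
def Sstar (S : AddSubmonoid M) : Set M := (S : Set M) \ {0}

/-- The set of gaps `H(S)`, the complement of `S`. -/
def Gaps (S : AddSubmonoid M) : Set M := (S : Set M)ᶜ

/-- The set of atoms `A(S) = S* \ (S* + S*)`. -/
def Atoms (S : AddSubmonoid M) : Set M := Sstar S \ (Sstar S + Sstar S)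

/-- `S` is an ideal extension: `S* + M ⊆ S*`. -/
def IsIdealExtension (S : AddSubmonoid M) : Prop :=
  ∀ s ∈ Sstar S, ∀ x : M, s + x ∈ Sstar S

/-- `S` is gap absorbing. -/
def IsGapAbsorbing (S : AddSubmonoid M) : Prop :=
  Gaps S + Gaps S ⊆ Gaps S ∪ Atoms S ∪ (Atoms S + Atoms S) ∧
  Gaps S + Atoms S ⊆ Atoms S ∪ (Atoms S + Atoms S)

/-- `M(S)`: minimal elements of `S*` with respect to `≤`. -/
def Mins (S : AddSubmonoid M) : Set M :=
  {m | m ∈ Sstar S ∧ ∀ t ∈ Sstar S, t ≤ m → t = m}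

/-- `n`-fold sumset, with `0`-fold sumset `{0}`. -/
def nfold : ℕ → Set M → Set M
  | 0, _ => {0}
  | n + 1, X => nfold n X + X

/-- The set of lengths `L(s) = {n : s ∈ nA(S)}`. -/
def Lset (S : AddSubmonoid M) (s : M) : Set ℕ := {n | s ∈ nfold n (Atoms S)}

/-- The minimal factorization length `ℓ(s)`. -/
noncomputable def minLen (S : AddSubmonoid M) (s : M) : ℕ := sInf (Lset S s)

/-- `X` is closed under intervals. -/
def ClosedUnderIntervals (X : Set M) : Prop :=
  ∀ u ∈ X, ∀ v ∈ X, u ≤ v → Set.Icc u v ⊆ X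

/-- `a ≤_S b`, i.e. `b - a ∈ S`. -/
def dvdS (S : AddSubmonoid M) (a b : M) : Prop := ∃ t ∈ S, a + t = b

end Defs

section Aux

variable {I : Set ℕ} {S : AddSubmonoid (↥I →₀ ℕ)}

theorem aux_nf_add {X : Set (↥I →₀ ℕ)} {m n : ℕ} {x y : ↥I →₀ ℕ} (hx : x ∈ nfold m X)
    (hy : y ∈ nfold n X) : x + y ∈ nfold (m + n) X := by
  induction n generalizing y with
  | zero =>
    have : y = 0 := hy
    subst this
    simpa using hx
  | succ n ih =>
    obtain ⟨z, hz, a, ha, rfl⟩ := Set.mem_add.1 hy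
    have h := Set.add_mem_add (ih hz) ha
    rw [add_assoc] at h
    exact h

theorem aux_nf_snoc {X : Set (↥I →₀ ℕ)} {n : ℕ} {x a : ↥I →₀ ℕ} (hx : x ∈ nfold n X)
    (ha : a ∈ X) : x + a ∈ nfold (n + 1) X := Set.add_mem_add hx ha

theorem aux_nf_one {X : Set (↥I →₀ ℕ)} {x : ↥I →₀ ℕ} (hx : x ∈ X) : x ∈ nfold 1 X := by
  have : (0 : ↥I →₀ ℕ) + x ∈ nfold 1 X := Set.add_mem_add (rfl : (0 : ↥I →₀ ℕ) ∈ ({0} : Set _)) hx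
  simpa using this

theorem aux_nf_two {X : Set (↥I →₀ ℕ)} {x : ↥I →₀ ℕ} (hx : x ∈ X + X) : x ∈ nfold 2 X := by
  obtain ⟨a, ha, b, hb, rfl⟩ := Set.mem_add.1 hx
  exact aux_nf_add (aux_nf_one ha) (aux_nf_one hb)

theorem aux_nf_split {X : Set (↥I →₀ ℕ)} {n : ℕ} {x : ↥I →₀ ℕ} (hx : x ∈ nfold (n + 1) X) :
    ∃ y ∈ nfold n X, ∃ a ∈ X, y + a = x := Set.mem_add.1 hx

theorem aux_atom_star {a : ↥I →₀ ℕ} (h : a ∈ Atoms S) : a ∈ Sstar S := h.1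

theorem aux_star_add {a b : ↥I →₀ ℕ} (h : a ∈ Sstar S) (hb : b ∈ S) : a + b ∈ Sstar S := by
  refine ⟨S.add_mem h.1 hb, ?_⟩
  intro h0
  apply h.2
  have h0 : a + b = 0 := h0
  have : a = 0 := by
    ext i
    have := DFunLike.congr_fun h0 i
    simp at this ⊢
    omega
  exact this

theorem aux_nf_mem {m : ℕ} {x : ↥I →₀ ℕ} (hx : x ∈ nfold m (Atoms S)) : x ∈ S := by
  induction m generalizing x with
  | zero =>
    have : x = 0 := hx
    subst this
    exact S.zero_mem
  | succ n ih =>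
    obtain ⟨z, hz, a, ha, rfl⟩ := aux_nf_split hx
    exact S.add_mem (ih hz) ha.1.1

theorem aux_nf_star {m : ℕ} (hm : 1 ≤ m) {x : ↥I →₀ ℕ} (hx : x ∈ nfold m (Atoms S)) :
    x ∈ Sstar S := by
  obtain ⟨n, rfl⟩ : ∃ n, m = n + 1 := ⟨m - 1, by omega⟩
  obtain ⟨z, hz, a, ha, rfl⟩ := aux_nf_split hx
  rw [add_comm]
  exact aux_star_add ha.1 (aux_nf_mem hz)

theorem aux_nf_not_atom {m : ℕ} (hm : 2 ≤ m) {x : ↥I →₀ ℕ} (hx : x ∈ nfold m (Atoms S)) :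
    x ∉ Atoms S := by
  obtain ⟨n, rfl⟩ : ∃ n, m = n + 1 := ⟨m - 1, by omega⟩
  obtain ⟨z, hz, a, ha, rfl⟩ := aux_nf_split hx
  intro h
  exact h.2 (Set.add_mem_add (aux_nf_star (by omega) hz) ha.1)

theorem aux_atomic {x : ↥I →₀ ℕ} (hx : x ∈ Sstar S) : ∃ m, 1 ≤ m ∧ x ∈ nfold m (Atoms S) := by
  obtain ⟨N, hN⟩ : ∃ N, x.degree ≤ N := ⟨_, le_rfl⟩
  induction N generalizing x with
  | zero =>
    exact absurd ((Finsupp.degree_eq_zero_iff x).1 (by omega)) hx.2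
  | succ N ih =>
    by_cases h : x ∈ Atoms S
    · exact ⟨1, le_rfl, aux_nf_one h⟩
    · have h2 : x ∈ Sstar S + Sstar S := by
        by_contra h2
        exact h ⟨hx, h2⟩
      obtain ⟨p, hp, q, hq, rfl⟩ := Set.mem_add.1 h2
      have hp0 : p.degree ≠ 0 := fun h => hp.2 ((Finsupp.degree_eq_zero_iff p).1 h)
      have hq0 : q.degree ≠ 0 := fun h => hq.2 ((Finsupp.degree_eq_zero_iff q).1 h)
      rw [map_add] at hN
      obtain ⟨m, hm, hm'⟩ := ih hp (by omega)
      obtain ⟨n, hn, hn'⟩ := ih hq (by omega)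
      exact ⟨m + n, by omega, aux_nf_add hm' hn'⟩

theorem aux_not_star {y : ↥I →₀ ℕ} (hy : y ∉ Sstar S) : y = 0 ∨ y ∈ Gaps S := by
  by_cases h : y = 0
  · exact Or.inl h
  · right
    intro hs
    exact hy ⟨hs, h⟩

theorem aux_absorb (hS : IsGapAbsorbing S) {a y : ↥I →₀ ℕ} (ha : a ∈ Atoms S)
    (hy : y ∉ Sstar S) : y + a ∈ Atoms S ∨ y + a ∈ nfold 2 (Atoms S) := by
  rcases aux_not_star hy with rfl | h
  · left; simpa using ha
  · rcases hS.2 (Set.add_mem_add h ha) with h | h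
    · exact Or.inl h
    · exact Or.inr (aux_nf_two h)

/-- having a factorization of length at least `n` -/
def AuxLong (S : AddSubmonoid (↥I →₀ ℕ)) (n : ℕ) (x : ↥I →₀ ℕ) : Prop :=
  ∃ m, n ≤ m ∧ x ∈ nfold m (Atoms S)

theorem aux_long_add (hS : IsGapAbsorbing S) {n : ℕ} (hn : 1 ≤ n) {x : ↥I →₀ ℕ}
    (hx : AuxLong S n x) (y : ↥I →₀ ℕ) : AuxLong S n (x + y) := by
  obtain ⟨m, hm, hx⟩ := hx
  by_cases hy : y ∈ Sstar S
  · obtain ⟨k, hk, hy⟩ := aux_atomic hy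
    exact ⟨m + k, by omega, aux_nf_add hx hy⟩
  · obtain ⟨j, rfl⟩ : ∃ j, m = j + 1 := ⟨m - 1, by omega⟩
    obtain ⟨z, hz, a, ha, rfl⟩ := aux_nf_split hx
    rw [add_assoc, add_comm a]
    rcases aux_absorb hS ha hy with h | h
    · exact ⟨j + 1, hm, aux_nf_add hz (aux_nf_one h)⟩
    · exact ⟨j + 2, by omega, aux_nf_add hz h⟩

theorem aux_up (hS : IsGapAbsorbing S) {x : ↥I →₀ ℕ} (hx : x ∈ Sstar S) (y : ↥I →₀ ℕ) :
    x + y ∈ Sstar S := by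
  obtain ⟨m, hm, h⟩ := aux_atomic hx
  obtain ⟨k, hk, h⟩ := aux_long_add hS le_rfl ⟨m, hm, h⟩ y
  exact aux_nf_star hk h

theorem aux_up2 (hS : IsGapAbsorbing S) {x : ↥I →₀ ℕ} (hx : x ∈ Sstar S + Sstar S)
    (y : ↥I →₀ ℕ) : x + y ∈ Sstar S + Sstar S := by
  obtain ⟨p, hp, q, hq, rfl⟩ := Set.mem_add.1 hx
  rw [add_assoc]
  exact Set.add_mem_add hp (aux_up hS hq y)

theorem aux_long_two {x : ↥I →₀ ℕ} (hx : x ∈ Sstar S) (ha : x ∉ Atoms S) : AuxLong S 2 x := by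
  have h2 : x ∈ Sstar S + Sstar S := by
    by_contra h2
    exact ha ⟨hx, h2⟩
  obtain ⟨p, hp, q, hq, rfl⟩ := Set.mem_add.1 h2
  obtain ⟨m, hm, hm'⟩ := aux_atomic hp
  obtain ⟨n, hn, hn'⟩ := aux_atomic hq
  exact ⟨m + n, by omega, aux_nf_add hm' hn'⟩

theorem aux_riesz {x b g D : ↥I →₀ ℕ} (h : x + b = g + D) :
    ∃ g' c D' d, g = g' + c ∧ D = D' + d ∧ x = g' + D' ∧ b = c + d := by
  refine ⟨g ⊓ x, g - g ⊓ x, x - g ⊓ x, D - (x - g ⊓ x), ?_, ?_, ?_, ?_⟩ <;>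
  · ext i
    have := DFunLike.congr_fun h i
    simp at this ⊢
    try omega

theorem aux_key (hS : IsGapAbsorbing S) (k : ℕ) : ∀ x g D : ↥I →₀ ℕ,
    x ∈ nfold (k + 3) (Atoms S) → x ∉ nfold (k + 2) (Atoms S) → x = g + D →
    (g ∈ Atoms S → AuxLong S (k + 1) D) ∧ (g ∉ Sstar S → AuxLong S (k + 2) D) := by
  induction k with
  | zero =>
    intro x g D hx hx2 h
    have hxA : x ∉ Atoms S := aux_nf_not_atom (by omega) hx
    have hxE : x ∈ Sstar S := aux_nf_star (by omega) hx
    constructor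
    · intro hg
      have : D ∈ Sstar S := by
        by_contra hD
        have := aux_absorb hS hg hD
        rw [add_comm, ← h] at this
        tauto
      exact aux_atomic this
    · intro hg
      have hD : D ∈ Sstar S := by
        by_contra hD
        rcases aux_not_star hg with rfl | hg'
        · rw [zero_add] at h; exact hD (h ▸ hxE)
        rcases aux_not_star hD with rfl | hD'
        · rw [add_zero] at h; exact hg (h ▸ hxE)
        have := hS.1 (Set.add_mem_add hg' hD')
        rw [← h] at this
        rcases this with (h1 | h1) | h1
        · exact h1 hxE.1
        · exact hxA h1
        · exact hx2 (aux_nf_two h1)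
      refine aux_long_two hD fun hA => ?_
      have := aux_absorb hS hA hg
      rw [← h] at this
      tauto
  | succ k ih =>
    intro x g D hx hx2 h
    obtain ⟨x', hx', b, hb, rfl⟩ := aux_nf_split hx
    have hx2' : x' ∉ nfold (k + 2) (Atoms S) := fun h' =>
      hx2 (aux_nf_snoc h' hb)
    obtain ⟨g', c, D', d, rfl, rfl, hxx, hbb⟩ := aux_riesz h
    obtain ⟨ih1, ih2⟩ := ih x' g' D' hx' hx2' hxx
    constructor
    · intro hg
      by_cases hg' : g' ∈ Sstar S
      · have hgA : g' ∈ Atoms S := ⟨hg', fun h2 => hg.2 (aux_up2 hS h2 c)⟩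
        obtain ⟨m, hm, hD⟩ := ih1 hgA
        by_cases hm1 : m = k + 1
        · subst hm1
          refine absurd ?_ hx2'
          rw [hxx, add_comm g']
          exact aux_nf_snoc hD hgA
        · exact aux_long_add hS (by omega) ⟨m, by omega, hD⟩ d
      · exact aux_long_add hS (by omega) (ih2 hg') d
    · intro hg
      have hg' : g' ∉ Sstar S := fun h' => hg (aux_up hS h' c)
      obtain ⟨m, hm, hD⟩ := ih2 hg'
      by_cases hm1 : m = k + 2
      swap
      · exact aux_long_add hS (by omega) ⟨m, by omega, hD⟩ d
      subst hm1
      by_cases hd : d ∈ Sstar S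
      · obtain ⟨j, hj, hd⟩ := aux_atomic hd
        exact ⟨k + 2 + j, by omega, aux_nf_add hD hd⟩
      obtain ⟨z, hz, e, he, rfl⟩ := aux_nf_split hD
      rcases aux_absorb hS he hd with hf | hf
      swap
      · refine ⟨k + 1 + 2, by omega, ?_⟩
        rw [add_assoc z, add_comm e]
        exact aux_nf_add hz hf
      rcases aux_absorb hS hf hg with hq | hq
      swap
      · refine absurd ?_ hx2
        have := aux_nf_add hz hq
        rw [h]
        convert this using 1
        abel
      · refine absurd ?_ hx2'
        have hA : g' + e ∈ Atoms S := by
          refine ⟨?_, fun h2 => hq.2 ?_⟩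
          · rw [add_comm]; exact aux_up hS he.1 g'
          · have := aux_up2 hS h2 (c + d)
            convert this using 1
            abel
        have := aux_nf_add hz (aux_nf_one hA)
        rw [hxx]
        convert this using 1
        abel

theorem aux_main (hS : IsGapAbsorbing S) (l : ℕ) : ∀ s : ↥I →₀ ℕ, s ∈ nfold l (Atoms S) →
    ∀ j m : ℕ, s ∈ nfold (m + j) (Atoms S) → l ≤ m → s ∈ nfold m (Atoms S) := by
  induction l with
  | zero =>
    intro s hs j m hmj _
    have hs : s = 0 := hs
    by_cases h : m + j = 0
    · obtain ⟨rfl, rfl⟩ : m = 0 ∧ j = 0 := by omega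
      exact hmj
    · exact absurd hs (aux_nf_star (by omega) hmj).2
  | succ l ih =>
    intro s hs j
    induction j with
    | zero => intro m h _; exact h
    | succ j ihj =>
      intro m hmj hl
      have h1 : s ∈ nfold (m + 1) (Atoms S) := by
        apply ihj
        · rwa [show m + 1 + j = m + (j + 1) by omega]
        · omega
      by_contra hcon
      by_cases hm : m = 1
      · subst hm
        obtain rfl : l = 0 := by omega
        exact hcon hs
      obtain ⟨k, rfl⟩ : ∃ k, m = k + 2 := ⟨m - 2, by omega⟩
      obtain ⟨D, hD, a, ha, rfl⟩ := aux_nf_split hs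
      obtain ⟨q, hq, hDq⟩ := (aux_key hS k _ a D h1 hcon (add_comm _ _)).1 ha
      obtain ⟨r, rfl⟩ : ∃ r, q = k + 1 + r := ⟨q - (k + 1), by omega⟩
      have := ih D hD r (k + 1) hDq (by omega)
      exact hcon (aux_nf_snoc this ha)

end Aux

theorem statement14 (I : Set ℕ) (hI : I.Nonempty) (S : AddSubmonoid (↥I →₀ ℕ))
    (hS : IsGapAbsorbing S) :
    ∀ s ∈ S, ∀ l ∈ Lset S s, ∀ l' ∈ Lset S s, ∀ m : ℕ,
      l ≤ m → m ≤ l' → m ∈ Lset S s := by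
  intro s _ l hl l' hl' m h1 h2
  obtain ⟨j, rfl⟩ : ∃ j, l' = m + j := ⟨l' - m, by omega⟩
  exact aux_main hS l s hl j m hl' h1
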